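/- If f: X → Y is a light continuous map of a compact metric space X onto a compact metric space Y of finite covering dimension, then for every abelian group A one has dim_A X ≤ dim_A Y. -/

import Mathlib

open Set Function

open scoped ENNReal

noncomputable section

/-! ### Covering dimension -/

/-- `CovDimLE X n` : every open cover of `X` has an open refinement of order at most `n + 1`
(i.e. at most `n + 1` members of the refinement have a common point). -/
def CovDimLE (X : Type*) [TopologicalSpace X] (n : ℕ) : Prop :=
  ∀ U : Set (Set X), (∀ u ∈ U, IsOpen u) → ⋃₀ U = univ →
    ∃ V : Set (Set X), (∀ v ∈ V, IsOpen v) ∧ ⋃₀ V = univ ∧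
      (∀ v ∈ V, ∃ u ∈ U, v ⊆ u) ∧
      ∀ T : Finset (Set X), ↑T ⊆ V → (⋂₀ (T : Set (Set X))).Nonempty → T.card ≤ n + 1

/-- The (Lebesgue) covering dimension of a topological space, valued in `ℕ∞`. -/
noncomputable def covDim (X : Type*) [TopologicalSpace X] : ℕ∞ :=
  sInf {e : ℕ∞ | ∃ n : ℕ, e = (n : ℕ∞) ∧ CovDimLE X n}

/-! ### Alexander–Spanier (Čech) cohomology -/

namespace AS

variable (A : Type*) [AddCommGroup A]

/-- Alexander–Spanier `n`-cochains on `X` with coefficients in `A`. -/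
abbrev Cochain (X : Type*) (n : ℕ) : Type _ := (Fin (n + 1) → X) → A

/-- The Alexander–Spanier coboundary operator. -/
def d (X : Type*) (n : ℕ) : Cochain A X n →+ Cochain A X (n + 1) :=
  AddMonoidHom.mk' (fun φ s => ∑ i : Fin (n + 2), ((-1 : ℤ) ^ (i : ℕ)) • φ (s ∘ i.succAbove))
    (fun φ ψ => funext fun s => by
      simp [smul_add, Finset.sum_add_distrib])

/-- An open cover of `X`. -/
def IsOpenCover {X : Type*} [TopologicalSpace X] (U : Set (Set X)) : Prop :=
  (∀ u ∈ U, IsOpen u) ∧ ⋃₀ U = univ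

/-- A tuple is `U`-small if it is contained in a single member of `U`. -/
def Small {X : Type*} (U : Set (Set X)) {k : ℕ} (s : Fin k → X) : Prop :=
  ∃ u ∈ U, ∀ i, s i ∈ u

/-- The subgroup of cochains vanishing on all tuples that are small with respect to
some open cover (i.e. vanishing in a neighbourhood of the diagonal). -/
def locZero (X : Type*) [TopologicalSpace X] (n : ℕ) : AddSubgroup (Cochain A X n) where
  carrier := {φ | ∃ U, IsOpenCover U ∧ ∀ s : Fin (n + 1) → X, Small U s → φ s = 0}
  zero_mem' := ⟨{univ}, ⟨fun u hu => by rw [mem_singleton_iff] at hu; rw [hu]; exact isOpen_univ,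
      by simp⟩, fun s _ => rfl⟩
  add_mem' := by
    rintro φ ψ ⟨U, ⟨hUo, hUc⟩, hφ⟩ ⟨W, ⟨hWo, hWc⟩, hψ⟩
    refine ⟨(fun p : Set X × Set X => p.1 ∩ p.2) '' (U ×ˢ W), ⟨?_, ?_⟩, ?_⟩
    · rintro _ ⟨⟨u, w⟩, ⟨hu, hw⟩, rfl⟩
      exact (hUo u hu).inter (hWo w hw)
    · apply eq_univ_of_forall
      intro x
      have hx1 : x ∈ ⋃₀ U := hUc ▸ mem_univ x
      have hx2 : x ∈ ⋃₀ W := hWc ▸ mem_univ x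
      obtain ⟨u, hu, hxu⟩ := hx1
      obtain ⟨w, hw, hxw⟩ := hx2
      exact ⟨u ∩ w, ⟨⟨u, w⟩, ⟨hu, hw⟩, rfl⟩, hxu, hxw⟩
    · rintro s ⟨_, ⟨⟨u, w⟩, ⟨hu, hw⟩, rfl⟩, hs⟩
      have h1 : φ s = 0 := hφ s ⟨u, hu, fun i => (hs i).1⟩
      have h2 : ψ s = 0 := hψ s ⟨w, hw, fun i => (hs i).2⟩
      show φ s + ψ s = 0
      rw [h1, h2, add_zero]
  neg_mem' := by
    rintro φ ⟨U, hU, hφ⟩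
    exact ⟨U, hU, fun s hs => by show -φ s = 0; rw [hφ s hs, neg_zero]⟩

/-- The Alexander–Spanier cochain complex: cochains modulo locally zero cochains. -/
abbrev QC (X : Type*) [TopologicalSpace X] (n : ℕ) : Type _ := Cochain A X n ⧸ locZero A X n

lemma d_locZero (X : Type*) [TopologicalSpace X] (n : ℕ) :
    locZero A X n ≤ (locZero A X (n + 1)).comap (d A X n) := by
  rintro φ ⟨U, hU, hφ⟩
  refine ⟨U, hU, fun s ⟨u, hu, hs⟩ => ?_⟩
  show (d A X n φ) s = 0
  have : ∀ i : Fin (n + 2), φ (s ∘ i.succAbove) = 0 :=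
    fun i => hφ _ ⟨u, hu, fun j => hs _⟩
  simp only [d, AddMonoidHom.mk'_apply]
  exact Finset.sum_eq_zero fun i _ => by rw [this i, smul_zero]

/-- The induced differential on the Alexander–Spanier complex. -/
def dQ (X : Type*) [TopologicalSpace X] (n : ℕ) : QC A X n →+ QC A X (n + 1) :=
  QuotientAddGroup.map _ _ (d A X n) (d_locZero A X n)

/-- Cocycles. -/
def cocycles (X : Type*) [TopologicalSpace X] (n : ℕ) : AddSubgroup (QC A X n) :=
  (dQ A X n).ker

/-- Coboundaries (the trivial subgroup in degree `0`). -/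
def cobounds (X : Type*) [TopologicalSpace X] (n : ℕ) : AddSubgroup (QC A X n) :=
  match n with
  | 0 => ⊥
  | (m + 1) => (dQ A X m).range

/-- Alexander–Spanier cohomology of `X` with coefficients in `A`; for paracompact Hausdorff
(e.g. metric) spaces this is naturally isomorphic to Čech cohomology. -/
def ASH (n : ℕ) (X : Type*) [TopologicalSpace X] : Type _ :=
  ↥(cocycles A X n) ⧸ ((cobounds A X n).comap (cocycles A X n).subtype)

instance (n : ℕ) (X : Type*) [TopologicalSpace X] : AddCommGroup (ASH A n X) :=
  inferInstanceAs (AddCommGroup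
    (↥(cocycles A X n) ⧸ ((cobounds A X n).comap (cocycles A X n).subtype)))

end AS

namespace AS

variable (A : Type*) [AddCommGroup A]

/-- Pullback of Alexander–Spanier cochains along a map. -/
def pull {X Y : Type*} (f : X → Y) (n : ℕ) : Cochain A Y n →+ Cochain A X n :=
  AddMonoidHom.mk' (fun φ s => φ (f ∘ s)) (fun φ ψ => rfl)

lemma pull_d {X Y : Type*} (f : X → Y) (n : ℕ) (φ : Cochain A Y n) :
    pull A f (n + 1) (d A Y n φ) = d A X n (pull A f n φ) := rfl

lemma pull_locZero {X Y : Type*} [TopologicalSpace X] [TopologicalSpace Y] {f : X → Y}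
    (hf : Continuous f) (n : ℕ) :
    locZero A Y n ≤ (locZero A X n).comap (pull A f n) := by
  rintro φ ⟨U, ⟨hUo, hUc⟩, hφ⟩
  refine ⟨(f ⁻¹' ·) '' U, ⟨?_, ?_⟩, ?_⟩
  · rintro _ ⟨u, hu, rfl⟩
    exact (hUo u hu).preimage hf
  · apply eq_univ_of_forall
    intro x
    have : f x ∈ ⋃₀ U := hUc ▸ mem_univ _
    obtain ⟨u, hu, hx⟩ := this
    exact ⟨f ⁻¹' u, ⟨u, hu, rfl⟩, hx⟩
  · rintro s ⟨_, ⟨u, hu, rfl⟩, hs⟩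
    exact hφ _ ⟨u, hu, fun i => hs i⟩

/-- Pullback on the Alexander–Spanier complex. -/
def pullQ {X Y : Type*} [TopologicalSpace X] [TopologicalSpace Y] {f : X → Y}
    (hf : Continuous f) (n : ℕ) : QC A Y n →+ QC A X n :=
  QuotientAddGroup.map _ _ (pull A f n) (pull_locZero A hf n)

lemma pullQ_d {X Y : Type*} [TopologicalSpace X] [TopologicalSpace Y] {f : X → Y}
    (hf : Continuous f) (n : ℕ) (x : QC A Y n) :
    pullQ A hf (n + 1) (dQ A Y n x) = dQ A X n (pullQ A hf n x) := by
  refine QuotientAddGroup.induction_on x ?_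
  intro φ
  simp only [pullQ, dQ, QuotientAddGroup.map_mk, pull_d]

lemma pullQ_cocycles {X Y : Type*} [TopologicalSpace X] [TopologicalSpace Y] {f : X → Y}
    (hf : Continuous f) (n : ℕ) {x : QC A Y n} (hx : x ∈ cocycles A Y n) :
    pullQ A hf n x ∈ cocycles A X n := by
  have : dQ A Y n x = 0 := hx
  show dQ A X n (pullQ A hf n x) = 0
  rw [← pullQ_d, this, map_zero]

lemma pullQ_cobounds {X Y : Type*} [TopologicalSpace X] [TopologicalSpace Y] {f : X → Y}
    (hf : Continuous f) (n : ℕ) {x : QC A Y n} (hx : x ∈ cobounds A Y n) :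
    pullQ A hf n x ∈ cobounds A X n := by
  match n with
  | 0 =>
    have : x = 0 := hx
    rw [this, map_zero]
    exact (⊥ : AddSubgroup (QC A X 0)).zero_mem
  | (m + 1) =>
    obtain ⟨y, rfl⟩ := hx
    exact ⟨pullQ A hf m y, (pullQ_d A hf m y).symm⟩

/-- The map on cocycles induced by a continuous map. -/
def pullZ {X Y : Type*} [TopologicalSpace X] [TopologicalSpace Y] {f : X → Y}
    (hf : Continuous f) (n : ℕ) : ↥(cocycles A Y n) →+ ↥(cocycles A X n) :=
  AddMonoidHom.codRestrict ((pullQ A hf n).comp (cocycles A Y n).subtype) _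
    (fun x => pullQ_cocycles A hf n x.2)

/-- The homomorphism induced on Alexander–Spanier (Čech) cohomology by a continuous map.
Note the contravariance: a map `f : X → Y` induces `ASHmap : ASH A n Y →+ ASH A n X`. -/
def ASHmap {X Y : Type*} [TopologicalSpace X] [TopologicalSpace Y] {f : X → Y}
    (hf : Continuous f) (n : ℕ) : ASH A n Y →+ ASH A n X :=
  QuotientAddGroup.map _ _ (pullZ A hf n) (by
    rintro ⟨x, hx⟩ hmem
    have : x ∈ cobounds A Y n := hmem
    exact pullQ_cobounds A hf n this)

end AS

namespace AS

variable (A : Type*) [AddCommGroup A]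

/-- Čech cohomology with compact supports: for compact `B` this is the (Alexander–Spanier =
Čech) cohomology of `B` itself, and for noncompact `B` it is that of the one-point
compactification of `B`. -/
def Hc (n : ℕ) (B : Type*) [TopologicalSpace B] : Type _ :=
  open scoped Classical in
  if CompactSpace B then ASH A n B else ASH A n (OnePoint B)

end AS

/-- The cohomological dimension `dim_A X` of a space `X` with respect to an abelian group `A`:
the supremum of the integers `n` for which there is a locally compact subset `B ⊆ X` with
`H^n_c(B; A) ≠ 0`. -/
noncomputable def cohDim (A : Type*) [AddCommGroup A] (X : Type*) [TopologicalSpace X] : ℕ∞ :=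
  sSup {e : ℕ∞ | ∃ n : ℕ, e = (n : ℕ∞) ∧
    ∃ B : Set X, LocallyCompactSpace B ∧ Nontrivial (AS.Hc A n B)}

namespace AS

variable {A : Type*} [AddCommGroup A] {M : Type*}

/-! ### Cones and prisms -/

lemma d_apply (n : ℕ) (φ : Cochain A M n) (s : Fin (n + 2) → M) :
    d A M n φ s = ∑ i : Fin (n + 2), ((-1 : ℤ) ^ (i : ℕ)) • φ (s ∘ i.succAbove) := rfl

lemma d_eq_zero {n : ℕ} {φ : Cochain A M n} {V : Set M} (h : ∀ s, (∀ i, s i ∈ V) → φ s = 0)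
    (s : Fin (n + 2) → M) (hs : ∀ i, s i ∈ V) : d A M n φ s = 0 := by
  rw [d_apply]
  exact Finset.sum_eq_zero fun i _ => by rw [h (s ∘ i.succAbove) fun j => hs _, smul_zero]

/-- Evaluation of a cochain on the cones with apex `t`. -/
def cone (t : M) (n : ℕ) : Cochain A M (n + 1) →+ Cochain A M n :=
  AddMonoidHom.mk' (fun φ s => φ (Fin.cons t s)) (fun _ _ => rfl)

lemma cone_apply (t : M) (n : ℕ) (φ : Cochain A M (n + 1)) (s : Fin (n + 1) → M) :
    cone t n φ s = φ (Fin.cons t s) := rfl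

lemma cons_comp_succ_succAbove (t : M) {n : ℕ} (s : Fin (n + 1) → M) (i : Fin (n + 1)) :
    (Fin.cons t s : Fin (n + 2) → M) ∘ i.succ.succAbove =
      (Fin.cons t (s ∘ i.succAbove) : Fin (n + 1) → M) := by
  funext j
  refine Fin.cases ?_ (fun j => ?_) j <;> simp

lemma d_cone (t : M) (n : ℕ) (φ : Cochain A M (n + 1)) :
    d A M n (cone t n φ) = φ - cone t (n + 1) (d A M (n + 1) φ) := by
  funext s
  have h0 : (Fin.cons t s : Fin (n + 3) → M) ∘ Fin.succ = s := by
    funext j; simp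
  simp only [Pi.sub_apply, cone_apply, d_apply]
  rw [Fin.sum_univ_succ (n := n + 2)]
  simp only [cons_comp_succ_succAbove, Fin.succAbove_zero, h0, Fin.val_zero, pow_zero, one_smul,
    Fin.val_succ, pow_succ, mul_neg, mul_one, neg_smul, Finset.sum_neg_distrib]
  abel

lemma cone_d_zero (t : M) (φ : Cochain A M 0) (s : Fin 1 → M) :
    cone t 0 (d A M 0 φ) s = φ s - φ (fun _ => t) := by
  have h0 : (Fin.cons t s : Fin 2 → M) ∘ Fin.succ = s := by
    funext j; simp
  have h1 : (Fin.cons t s : Fin 2 → M) ∘ Fin.succAbove 1 = fun _ => t := by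
    funext j; fin_cases j; rfl
  rw [cone_apply, d_apply, Fin.sum_univ_two, Fin.succAbove_zero, h0, h1]
  simp [sub_eq_add_neg]

lemma d_d (n : ℕ) (φ : Cochain A M n) : d A M (n + 1) (d A M n φ) = 0 := by
  induction n with
  | zero =>
    funext s
    obtain ⟨t, s', rfl⟩ : ∃ t s', s = Fin.cons t s' :=
      ⟨s 0, Fin.tail s, (Fin.cons_self_tail s).symm⟩
    have h0 : cone t 0 (d A M 0 φ) = φ - fun _ => φ (fun _ => t) :=
      funext fun x => cone_d_zero t φ x
    have h1 := d_cone t 0 (d A M 0 φ)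
    rw [h0, map_sub] at h1
    have h2 := congrFun (sub_right_inj.1 h1) s'
    change cone t 1 (d A M 1 (d A M 0 φ)) s' = 0
    rw [← h2]
    simp [d_apply, Fin.sum_univ_succ]
  | succ n ih =>
    funext s
    obtain ⟨t, s', rfl⟩ : ∃ t s', s = Fin.cons t s' :=
      ⟨s 0, Fin.tail s, (Fin.cons_self_tail s).symm⟩
    have h0 : cone t (n + 1) (d A M (n + 1) φ) = φ - d A M n (cone t n φ) := by
      rw [d_cone]; abel
    have h1 := d_cone t (n + 1) (d A M (n + 1) φ)
    rw [h0, map_sub, ih] at h1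
    exact (congrFun (sub_right_inj.1 h1) s').symm

/-- The prism operator of the homotopy between the identity and a (not necessarily continuous)
self-map `r`. -/
def prism (r : M → M) : (n : ℕ) → Cochain A M (n + 1) →+ Cochain A M n
  | 0 => AddMonoidHom.mk' (fun φ s => cone (s 0) 0 φ (r ∘ s) - cone (s 0) 0 φ s)
      (fun φ ψ => funext fun s => by simp only [map_add, Pi.add_apply]; abel)
  | n + 1 => AddMonoidHom.mk' (fun φ s => cone (s 0) (n + 1) φ (r ∘ s) - cone (s 0) (n + 1) φ s
        - d A M n (prism r n (cone (s 0) (n + 1) φ)) s)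
      (fun φ ψ => funext fun s => by simp only [map_add, Pi.add_apply]; abel)

lemma prism_zero_apply (r : M → M) (φ : Cochain A M 1) (s : Fin 1 → M) :
    prism r 0 φ s = cone (s 0) 0 φ (r ∘ s) - cone (s 0) 0 φ s := rfl

lemma prism_succ_apply (r : M → M) (n : ℕ) (φ : Cochain A M (n + 2)) (s : Fin (n + 2) → M) :
    prism r (n + 1) φ s = cone (s 0) (n + 1) φ (r ∘ s) - cone (s 0) (n + 1) φ s
        - d A M n (prism r n (cone (s 0) (n + 1) φ)) s := rfl

lemma prism_zero_d (r : M → M) (φ : Cochain A M 0) :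
    prism r 0 (d A M 0 φ) = pull A r 0 φ - φ := by
  funext s
  rw [prism_zero_apply, cone_d_zero, cone_d_zero]
  simp [pull]

lemma prism_d_of_key (r : M → M) (n : ℕ) (φ : Cochain A M (n + 1))
    (key : ∀ c : Cochain A M n, d A M n (pull A r n c - c - prism r n (d A M n c)) = 0) :
    prism r (n + 1) (d A M (n + 1) φ) + d A M n (prism r n φ) = pull A r (n + 1) φ - φ := by
  funext s
  have hc : cone (s 0) (n + 1) (d A M (n + 1) φ) = φ - d A M n (cone (s 0) n φ) := by
    rw [d_cone]; abel
  have hk := congrFun (key (cone (s 0) n φ)) s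
  rw [map_sub, map_sub, ← pull_d] at hk
  simp only [Pi.add_apply, prism_succ_apply, hc, Pi.sub_apply, map_sub] at hk ⊢
  simp only [pull, AddMonoidHom.mk'_apply, Pi.zero_apply] at hk ⊢
  rw [← sub_eq_zero, ← neg_eq_zero, ← hk]
  abel

lemma prism_d (r : M → M) (n : ℕ) (φ : Cochain A M (n + 1)) :
    prism r (n + 1) (d A M (n + 1) φ) + d A M n (prism r n φ) = pull A r (n + 1) φ - φ := by
  induction n with
  | zero => exact prism_d_of_key r 0 φ fun c => by rw [prism_zero_d, sub_self, map_zero]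
  | succ n ih =>
    refine prism_d_of_key r (n + 1) φ fun c => ?_
    rw [← ih c, add_sub_cancel_left, d_d]

lemma prism_eq_zero (r : M → M) (n : ℕ) (φ : Cochain A M (n + 1)) (W : Set M)
    (hφ : ∀ s, (∀ i, s i ∈ W) → φ s = 0) (s : Fin (n + 1) → M)
    (hs : ∀ i, s i ∈ W) (hrs : ∀ i, r (s i) ∈ W) : prism r n φ s = 0 := by
  induction n with
  | zero =>
    rw [prism_zero_apply, cone_apply, cone_apply, hφ, hφ, sub_zero]
    · exact Fin.cases (hs 0) hs
    · exact Fin.cases (hs 0) hrs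
  | succ n ih =>
    rw [prism_succ_apply, cone_apply, cone_apply, hφ, hφ, sub_zero, zero_sub, neg_eq_zero, d_apply]
    · refine Finset.sum_eq_zero fun i _ => ?_
      have hc : ∀ u, (∀ i, u i ∈ W) → cone (s 0) (n + 1) φ u = 0 :=
        fun u hu => hφ _ (Fin.cases (hs 0) hu)
      rw [ih _ hc (s ∘ i.succAbove) (fun j => hs _) (fun j => hrs _), smul_zero]
    · exact Fin.cases (hs 0) hs
    · exact Fin.cases (hs 0) hrs

end AS

namespace AS

open Filter Topology

variable {A : Type*} [AddCommGroup A] {M N : Type*} [TopologicalSpace M] [TopologicalSpace N]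

/-! ### Local vanishing and relative acyclicity -/

/-- `φ` vanishes on all tuples in some neighbourhood of `x` within `C`. -/
def VanAt (C : Set M) {n : ℕ} (φ : Cochain A M n) (x : M) : Prop :=
  ∃ V ∈ 𝓝[C] x, ∀ s, (∀ i, s i ∈ V) → φ s = 0

/-- `φ` vanishes locally on `C`. -/
def LocVan (C : Set M) {n : ℕ} (φ : Cochain A M n) : Prop := ∀ x ∈ C, VanAt C φ x

/-- `φ` vanishes on all tuples of points of `C` in some neighbourhood of `D`. -/
def NearVan (C D : Set M) {n : ℕ} (φ : Cochain A M n) : Prop :=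
  ∃ V ∈ 𝓝ˢ D, ∀ s, (∀ i, s i ∈ V ∩ C) → φ s = 0

variable (A) in
/-- Vanishing of the relative Alexander–Spanier cohomology of the pair `(C, D)` in degree
`n + 1`: every relative cocycle is a relative coboundary. -/
def RelAcyclic (n : ℕ) (C D : Set M) : Prop :=
  ∀ φ : Cochain A M (n + 1), LocVan C (d A M (n + 1) φ) → NearVan C D φ →
    ∃ ψ : Cochain A M n, LocVan C (φ - d A M n ψ) ∧ NearVan C D ψ

variable {C D E : Set M} {C' D' : Set N} {n : ℕ} {φ ψ : Cochain A M n} {x : M}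

lemma VanAt.add (h : VanAt C φ x) (h' : VanAt C ψ x) : VanAt C (φ + ψ) x := by
  obtain ⟨V, hV, h⟩ := h
  obtain ⟨W, hW, h'⟩ := h'
  refine ⟨V ∩ W, inter_mem hV hW, fun s hs => ?_⟩
  rw [Pi.add_apply, h s fun i => (hs i).1, h' s fun i => (hs i).2, add_zero]

lemma VanAt.neg (h : VanAt C φ x) : VanAt C (-φ) x := by
  obtain ⟨V, hV, h⟩ := h
  exact ⟨V, hV, fun s hs => by rw [Pi.neg_apply, h s hs, neg_zero]⟩

lemma VanAt.sub (h : VanAt C φ x) (h' : VanAt C ψ x) : VanAt C (φ - ψ) x :=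
  sub_eq_add_neg φ ψ ▸ h.add h'.neg

lemma VanAt.d (h : VanAt C φ x) : VanAt C (d A M n φ) x := by
  obtain ⟨V, hV, h⟩ := h
  exact ⟨V, hV, d_eq_zero h⟩

lemma VanAt.mono (h : VanAt C φ x) (hD : D ⊆ C) : VanAt D φ x := by
  obtain ⟨V, hV, h⟩ := h
  exact ⟨V, nhdsWithin_mono x hD hV, h⟩

lemma LocVan.add (h : LocVan C φ) (h' : LocVan C ψ) : LocVan C (φ + ψ) :=
  fun x hx => (h x hx).add (h' x hx)

lemma LocVan.sub (h : LocVan C φ) (h' : LocVan C ψ) : LocVan C (φ - ψ) :=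
  fun x hx => (h x hx).sub (h' x hx)

lemma LocVan.d (h : LocVan C φ) : LocVan C (d A M n φ) := fun x hx => (h x hx).d

lemma LocVan.mono (h : LocVan C φ) (hD : D ⊆ C) : LocVan D φ :=
  fun x hx => (h x (hD hx)).mono hD

lemma NearVan.vanAt (h : NearVan C D φ) (hx : x ∈ D) : VanAt C φ x := by
  obtain ⟨V, hV, h⟩ := h
  exact ⟨V ∩ C, inter_mem (mem_nhdsWithin_of_mem_nhds (mem_nhdsSet_iff_forall.1 hV x hx))
    self_mem_nhdsWithin, h⟩

lemma NearVan.add (h : NearVan C D φ) (h' : NearVan C D ψ) : NearVan C D (φ + ψ) := by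
  obtain ⟨V, hV, h⟩ := h
  obtain ⟨W, hW, h'⟩ := h'
  refine ⟨V ∩ W, inter_mem hV hW, fun s hs => ?_⟩
  rw [Pi.add_apply, h s fun i => ⟨(hs i).1.1, (hs i).2⟩, h' s fun i => ⟨(hs i).1.2, (hs i).2⟩,
    add_zero]

lemma NearVan.neg (h : NearVan C D φ) : NearVan C D (-φ) := by
  obtain ⟨V, hV, h⟩ := h
  exact ⟨V, hV, fun s hs => by rw [Pi.neg_apply, h s hs, neg_zero]⟩

lemma NearVan.sub (h : NearVan C D φ) (h' : NearVan C D ψ) : NearVan C D (φ - ψ) :=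
  sub_eq_add_neg φ ψ ▸ h.add h'.neg

lemma NearVan.d (h : NearVan C D φ) : NearVan C D (d A M n φ) := by
  obtain ⟨V, hV, h⟩ := h
  exact ⟨V, hV, d_eq_zero h⟩

lemma NearVan.mono_left (h : NearVan C D φ) (hE : E ⊆ C) : NearVan E D φ := by
  obtain ⟨V, hV, h⟩ := h
  exact ⟨V, hV, fun s hs => h s fun i => ⟨(hs i).1, hE (hs i).2⟩⟩

lemma NearVan.mono_right (h : NearVan C D φ) (hE : E ⊆ D) : NearVan C E φ := by
  obtain ⟨V, hV, h⟩ := h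
  exact ⟨V, nhdsSet_mono hE hV, h⟩

lemma nearVan_empty : NearVan C ∅ φ :=
  ⟨∅, by simp, fun _ hs => (hs 0).1.elim⟩

lemma isOpen_vanAt (C : Set M) (φ : Cochain A M n) : IsOpen {x | VanAt C φ x} := by
  rw [isOpen_iff_mem_nhds]
  rintro x ⟨V, hV, h⟩
  filter_upwards [eventually_nhds_nhdsWithin.2 hV] with y hy using ⟨V, hy, h⟩

open scoped Classical in
/-- A cochain vanishing locally at the points of `D` can be altered by a locally vanishing
cochain so as to vanish on all tuples near `D`. -/
lemma exists_nearVan [NormalSpace M] (hD : IsClosed D) (h : ∀ x ∈ D, VanAt C φ x) :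
    ∃ φ' : Cochain A M n, NearVan C D φ' ∧ LocVan C (φ - φ') := by
  obtain ⟨V, hVo, hDV, hV⟩ := normal_exists_closure_subset hD (isOpen_vanAt C φ) h
  refine ⟨fun s => if ∀ i, s i ∈ V then 0 else φ s,
    ⟨V, hVo.mem_nhdsSet.2 hDV, fun s hs => if_pos fun i => (hs i).1⟩, fun x _ => ?_⟩
  by_cases hx : x ∈ closure V
  · obtain ⟨W, hW, hφ⟩ := hV hx
    refine ⟨W, hW, fun s hs => ?_⟩
    simp [hφ s hs]
  · refine ⟨(closure V)ᶜ, mem_nhdsWithin_of_mem_nhds (isClosed_closure.isOpen_compl.mem_nhds hx),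
      fun s hs => ?_⟩
    have : ¬ ∀ i, s i ∈ V := fun h => hs 0 (subset_closure (h 0))
    simp only [Pi.sub_apply, if_neg this, sub_self]

/-! ### Excision -/

/-- A not necessarily continuous function `p` that behaves like a map of pairs
`(C, D) → (C', D')` for the purposes of relative cohomology. -/
structure RelCont (p : M → N) (C D : Set M) (C' D' : Set N) : Prop where
  mapsTo : MapsTo p C C'
  cont : ∀ x ∈ C \ D, ContinuousWithinAt p C x
  near : ∀ V ∈ 𝓝ˢ D', ∃ U ∈ 𝓝ˢ D, ∀ x ∈ U ∩ C, p x ∈ V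

lemma RelCont.nearVan {p : M → N} (hp : RelCont p C D C' D') {φ : Cochain A N n}
    (h : NearVan C' D' φ) : NearVan C D (pull A p n φ) := by
  obtain ⟨V, hV, h⟩ := h
  obtain ⟨U, hU, hUV⟩ := hp.near V hV
  exact ⟨U, hU, fun s hs => h _ fun i => ⟨hUV _ (hs i), hp.mapsTo (hs i).2⟩⟩

lemma vanAt_pull {p : M → N} (hp : MapsTo p C C') (hc : ContinuousWithinAt p C x)
    {φ : Cochain A N n} (h : VanAt C' φ (p x)) : VanAt C (pull A p n φ) x := by
  obtain ⟨V, hV, h⟩ := h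
  exact ⟨p ⁻¹' V, hc.tendsto_nhdsWithin hp hV, fun s hs => h _ hs⟩

lemma RelCont.locVan {p : M → N} (hp : RelCont p C D C' D') {φ : Cochain A N n}
    (h : LocVan C' φ) (h' : NearVan C' D' φ) : LocVan C (pull A p n φ) := by
  intro x hx
  by_cases hxD : x ∈ D
  · exact (hp.nearVan h').vanAt hxD
  · exact vanAt_pull hp.mapsTo (hp.cont x ⟨hx, hxD⟩) (h _ (hp.mapsTo hx))

lemma RelAcyclic.of_relCont {p : M → N} {e : N → M} (hp : RelCont p C D C' D')
    (he : RelCont e C' D' C D) (hD : IsClosed D) (hep : ∀ x ∈ C \ D, e (p x) = x)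
    (h : RelAcyclic A n C' D') : RelAcyclic A n C D := by
  intro φ hφ hφD
  obtain ⟨ψ, hψ, hψD⟩ := h (pull A e (n + 1) φ) (he.locVan hφ hφD.d) (he.nearVan hφD)
  have hnear := (he.nearVan hφD).sub hψD.d
  refine ⟨pull A p n ψ, ?_, hp.nearVan hψD⟩
  have h1 : LocVan C (φ - pull A p (n + 1) (pull A e (n + 1) φ)) := by
    intro x hx
    by_cases hxD : x ∈ D
    · exact (hφD.sub (hp.nearVan (he.nearVan hφD))).vanAt hxD
    · refine ⟨Dᶜ ∩ C, inter_mem (mem_nhdsWithin_of_mem_nhds (hD.isOpen_compl.mem_nhds hxD))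
        self_mem_nhdsWithin, fun s hs => ?_⟩
      have : e ∘ p ∘ s = s := funext fun i => hep _ ⟨(hs i).2, (hs i).1⟩
      simp only [pull, AddMonoidHom.mk'_apply, Pi.sub_apply, this, sub_self]
  have h2 := h1.add (hp.locVan hψ hnear)
  rwa [map_sub, pull_d, sub_add_sub_cancel] at h2

end AS

namespace AS

open Filter Topology

variable {A : Type*} [AddCommGroup A]

/-! ### Gluing -/

section Glue

variable {M : Type*} [MetricSpace M] {C D E : Set M} {n : ℕ}

lemma exists_retraction (hD : IsClosed D) (hne : D.Nonempty) :
    ∃ r : M → M, (∀ x, r x ∈ D) ∧ (∀ x ∈ D, r x = x) ∧ ∀ x ∈ D, ContinuousAt r x := by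
  have H : ∀ x, ∃ y ∈ D, ∀ z ∈ D, dist y z ≤ 3 * dist x z := by
    intro x
    by_cases hx : x ∈ D
    · exact ⟨x, hx, fun z _ => by linarith [dist_nonneg (x := x) (y := z)]⟩
    · have hpos : 0 < Metric.infDist x D := (hD.notMem_iff_infDist_pos hne).1 hx
      obtain ⟨y, hy, hxy⟩ := (Metric.infDist_lt_iff hne).1
        (show Metric.infDist x D < 2 * Metric.infDist x D by linarith)
      refine ⟨y, hy, fun z hz => ?_⟩
      have h1 := Metric.infDist_le_dist_of_mem (x := x) hz
      have h2 := dist_triangle y x z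
      rw [dist_comm y x] at h2
      linarith
  choose r hr hrd using H
  have hfix : ∀ x ∈ D, r x = x := fun x hx => dist_le_zero.1 (by simpa using hrd x x hx)
  refine ⟨r, hr, hfix, fun x hx => ?_⟩
  rw [ContinuousAt, hfix x hx, tendsto_iff_dist_tendsto_zero]
  refine squeeze_zero (fun _ => dist_nonneg) (fun y => hrd y x hx) ?_
  have : Continuous fun y => 3 * dist y x := by fun_prop
  simpa using this.tendsto x

lemma RelAcyclic.trans (hD : IsClosed D) (hDC : D ⊆ C) (hED : E ⊆ D)
    (h₁ : RelAcyclic A n C D) (h₂ : RelAcyclic A n D E) : RelAcyclic A n C E := by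
  rcases D.eq_empty_or_nonempty with rfl | hne
  · rwa [subset_empty_iff.1 hED]
  intro φ hφ hφE
  obtain ⟨r, hrD, hfix, hrc⟩ := exists_retraction hD hne
  obtain ⟨ψ₀, hψ₀, hψ₀E⟩ := h₂ φ (hφ.mono hDC) (hφE.mono_left hDC)
  set ψ₁ := pull A r n ψ₀ - prism r n φ with hψ₁
  have hrt : ∀ x ∈ D, Tendsto r (𝓝 x) (𝓝[D] x) := fun x hx => by
    have := tendsto_nhdsWithin_iff.2 ⟨hrc x hx, Eventually.of_forall hrD⟩
    rwa [hfix x hx] at this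
  have hψ₁E : NearVan C E ψ₁ := by
    obtain ⟨V, hV, h⟩ := hφE
    obtain ⟨W, hW, h'⟩ := hψ₀E
    have hpre : ∀ S ∈ 𝓝ˢ E, r ⁻¹' S ∈ 𝓝ˢ E := fun S hS => mem_nhdsSet_iff_forall.2 fun x hx =>
      (hrc x (hED hx)).preimage_mem_nhds
        (by rw [hfix x (hED hx)]; exact mem_nhdsSet_iff_forall.1 hS x hx)
    refine ⟨V ∩ (r ⁻¹' V ∩ r ⁻¹' W), inter_mem hV (inter_mem (hpre V hV) (hpre W hW)),
      fun s hs => ?_⟩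
    rw [hψ₁, Pi.sub_apply, prism_eq_zero r n φ (V ∩ C) h s (fun i => ⟨(hs i).1.1, (hs i).2⟩)
      fun i => ⟨(hs i).1.2.1, hDC (hrD _)⟩, sub_zero]
    exact h' _ fun i => ⟨(hs i).1.2.2, hrD _⟩
  have hvan : ∀ x ∈ D, VanAt C (φ - d A M n ψ₁) x := by
    intro x hx
    have e : φ - d A M n ψ₁ =
        pull A r (n + 1) (φ - d A M n ψ₀) - prism r (n + 1) (d A M (n + 1) φ) := by
      have := prism_d r n φ
      rw [hψ₁, map_sub, map_sub, ← pull_d, eq_sub_of_add_eq this]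
      abel
    rw [e]
    refine VanAt.sub ?_ ?_
    · obtain ⟨V, hV, h⟩ := hψ₀ x hx
      exact ⟨r ⁻¹' V, mem_nhdsWithin_of_mem_nhds (hrt x hx hV), fun s hs => h _ hs⟩
    · obtain ⟨V, hV, h⟩ := hφ x (hDC hx)
      refine ⟨V ∩ r ⁻¹' V, inter_mem hV (mem_nhdsWithin_of_mem_nhds
        (hrt x hx (nhdsWithin_mono x hDC hV))), fun s hs => ?_⟩
      exact prism_eq_zero r _ _ V h s (fun i => (hs i).1) fun i => (hs i).2
  obtain ⟨φ₁, hφ₁, hφ₁'⟩ := exists_nearVan (C := C) hD hvan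
  have hdφ₁ : LocVan C (d A M (n + 1) φ₁) := by
    have := hφ.sub hφ₁'.d
    rwa [map_sub, map_sub, d_d, sub_zero, sub_sub_cancel] at this
  obtain ⟨ψ₂, hψ₂, hψ₂D⟩ := h₁ φ₁ hdφ₁ hφ₁
  refine ⟨ψ₁ + ψ₂, ?_, hψ₁E.add (hψ₂D.mono_right hED)⟩
  convert hφ₁'.add hψ₂ using 1
  rw [map_add]
  abel

lemma RelAcyclic.union_of_disjoint (hC : IsClosed C) (hD : IsClosed D) (hdisj : Disjoint C D)
    (h : RelAcyclic A n C ∅) : RelAcyclic A n (C ∪ D) D := by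
  classical
  intro φ hφ hφD
  obtain ⟨ψ, hψ, -⟩ := h φ (hφ.mono subset_union_left) nearVan_empty
  have hD' : NearVan (C ∪ D) D fun s => if ∀ i, s i ∈ C then ψ s else 0 :=
    ⟨Cᶜ, hC.isOpen_compl.mem_nhdsSet.2 hdisj.subset_compl_left, fun s hs =>
      if_neg fun h => (hs 0).1 (h 0)⟩
  refine ⟨_, fun x hx => ?_, hD'⟩
  by_cases hxD : x ∈ D
  · exact (hφD.sub hD'.d).vanAt hxD
  · obtain ⟨V, hV, h⟩ := hψ x (hx.resolve_right hxD)
    have hCn : C ∈ 𝓝[C ∪ D] x := by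
      filter_upwards [self_mem_nhdsWithin,
        mem_nhdsWithin_of_mem_nhds (hD.isOpen_compl.mem_nhds hxD)] with y hy hyD
      exact hy.resolve_right hyD
    refine ⟨V ∩ C, inter_mem (nhdsWithin_le_iff.2 hCn hV) hCn, fun s hs => ?_⟩
    have := h s fun i => (hs i).1
    rw [Pi.sub_apply, sub_eq_zero] at this ⊢
    rw [this, d_apply, d_apply]
    refine Finset.sum_congr rfl fun i _ => ?_
    rw [if_pos]
    exact fun j => (hs (i.succAbove j)).2

end Glue

/-! ### Comparison with Alexander–Spanier cohomology -/

section Compare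

variable {T : Type*} [TopologicalSpace T] {n : ℕ}

lemma mem_locZero_iff (φ : Cochain A T n) : φ ∈ locZero A T n ↔ LocVan univ φ := by
  constructor
  · rintro ⟨U, ⟨hUo, hU⟩, h⟩ x -
    obtain ⟨u, hu, hxu⟩ := mem_sUnion.1 (hU ▸ mem_univ x)
    exact ⟨u, mem_nhdsWithin_of_mem_nhds ((hUo u hu).mem_nhds hxu), fun s hs => h s ⟨u, hu, hs⟩⟩
  · intro h
    refine ⟨{u | IsOpen u ∧ ∀ s, (∀ i, s i ∈ u) → φ s = 0}, ⟨fun u hu => hu.1, ?_⟩,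
      fun s ⟨u, hu, hs⟩ => hu.2 s hs⟩
    refine eq_univ_of_forall fun x => ?_
    obtain ⟨V, hV, hφ⟩ := h x (mem_univ x)
    rw [nhdsWithin_univ] at hV
    exact ⟨interior V, ⟨isOpen_interior, fun s hs => hφ s fun i => interior_subset (hs i)⟩,
      mem_interior_iff_mem_nhds.2 hV⟩

lemma subsingleton_ASH_iff :
    Subsingleton (ASH A (n + 1) T) ↔ RelAcyclic A n (univ : Set T) ∅ := by
  have h0 : Subsingleton (ASH A (n + 1) T) ↔ cocycles A T (n + 1) ≤ cobounds A T (n + 1) := by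
    rw [ASH, QuotientAddGroup.subsingleton_iff]
    exact AddSubgroup.addSubgroupOf_eq_top
  rw [h0]
  constructor
  · intro h φ hφ _
    have h1 : (φ : QC A T (n + 1)) ∈ cocycles A T (n + 1) :=
      (QuotientAddGroup.eq_zero_iff _).2 ((mem_locZero_iff _).2 hφ)
    obtain ⟨y, hy⟩ := h h1
    induction y using QuotientAddGroup.induction_on with
    | H ψ =>
      refine ⟨ψ, (mem_locZero_iff _).1 ?_, nearVan_empty⟩
      rw [← neg_sub, neg_mem_iff, sub_eq_neg_add]
      exact QuotientAddGroup.eq.1 hy.symm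
  · intro h x hx
    induction x using QuotientAddGroup.induction_on with
    | H φ =>
      obtain ⟨ψ, hψ, -⟩ := h φ
        ((mem_locZero_iff _).1 ((QuotientAddGroup.eq_zero_iff _).1 hx)) nearVan_empty
      refine ⟨(ψ : QC A T n), QuotientAddGroup.eq.2 ?_⟩
      rw [← sub_eq_neg_add]
      exact (mem_locZero_iff _).2 hψ

lemma relAcyclic_singleton_iff (t : T) :
    RelAcyclic A n (univ : Set T) {t} ↔ RelAcyclic A n (univ : Set T) ∅ := by
  constructor
  · intro h φ hφ _
    have e : φ - d A T n (cone t n φ) = cone t (n + 1) (d A T (n + 1) φ) := by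
      rw [d_cone]; abel
    have hnear : NearVan univ {t} (φ - d A T n (cone t n φ)) := by
      obtain ⟨V, hV, hv⟩ := hφ t (mem_univ t)
      rw [nhdsWithin_univ] at hV
      rw [e]
      exact ⟨V, by rwa [nhdsSet_singleton], fun s hs =>
        hv _ (Fin.cases (mem_of_mem_nhds hV) fun i => (hs i).1)⟩
    obtain ⟨ψ, hψ, -⟩ := h _ (by rwa [map_sub, d_d, sub_zero]) hnear
    exact ⟨cone t n φ + ψ, by rwa [map_add, ← sub_sub], nearVan_empty⟩
  · intro h φ hφ hφt
    obtain ⟨ψ, hψ, -⟩ := h φ hφ nearVan_empty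
    have e : d A T n (cone t n (d A T n ψ)) = d A T n ψ := by
      rw [d_cone, d_d, map_zero, sub_zero]
    refine ⟨cone t n (d A T n ψ), by rwa [e], ?_⟩
    obtain ⟨V, hV, hv⟩ := (hφt.vanAt (mem_singleton t)).sub (hψ t (mem_univ t))
    rw [nhdsWithin_univ] at hV
    rw [sub_sub_cancel] at hv
    exact ⟨V, by rwa [nhdsSet_singleton], fun s hs =>
      hv _ (Fin.cases (mem_of_mem_nhds hV) fun i => (hs i).1)⟩

end Compare

end AS

namespace AS

open Filter Topology

variable {A : Type*} [AddCommGroup A]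

/-! ### Cohomology with compact supports as relative cohomology of compact pairs -/

section CompactSupports

variable {M B : Type*} [MetricSpace M] [TopologicalSpace B] {C D : Set M} {n : ℕ}

open scoped Classical in
/-- Excision for the homeomorphism of `C` with a compact space. -/
lemma relAcyclic_iff_of_homeomorph (k : ↥C ≃ₜ B) :
    RelAcyclic A n C ∅ ↔ RelAcyclic A n (univ : Set B) ∅ := by
  rcases isEmpty_or_nonempty B with hB | ⟨⟨b₀⟩⟩
  · have hC : C = ∅ := eq_empty_of_forall_notMem fun x hx => hB.elim (k ⟨x, hx⟩)
    refine iff_of_true (fun φ _ _ => ⟨0, fun x hx => ?_, nearVan_empty⟩)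
      fun φ _ _ => ⟨0, fun b => hB.elim b, nearVan_empty⟩
    exact absurd hx (hC ▸ notMem_empty x)
  · set p : M → B := fun x => if h : x ∈ C then k ⟨x, h⟩ else b₀ with hp
    have hpk : ∀ x : C, p x = k x := fun x => dif_pos x.2
    have hpC : RelCont p C ∅ univ ∅ := by
      refine ⟨mapsTo_univ _ _, fun x hx => ?_, fun V hV => ⟨∅, by simp, fun x hx => hx.1.elim⟩⟩
      refine (continuousOn_iff_continuous_domRestrict.2 ?_) x hx.1
      exact k.continuous.congr fun x => (hpk x).symm
    have heC : RelCont (fun b => (k.symm b : M)) univ ∅ C ∅ :=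
      ⟨fun b _ => (k.symm b).2, fun b _ => by fun_prop,
        fun V hV => ⟨∅, by simp, fun x hx => hx.1.elim⟩⟩
    refine ⟨fun h => h.of_relCont heC hpC isClosed_empty fun b _ => ?_,
      fun h => h.of_relCont hpC heC isClosed_empty fun x hx => ?_⟩
    · rw [hpk, k.apply_symm_apply]
    · lift x to C using hx.1
      rw [hpk, k.symm_apply_apply]

open scoped Classical in
/-- Excision for a relative homeomorphism onto a one-point compactification. -/
lemma relAcyclic_iff_onePoint (hC : IsCompact C) (hD : IsClosed D) (hDC : D ⊆ C)
    (hne : D.Nonempty) (k : ↥(C \ D) ≃ₜ B) :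
    RelAcyclic A n C D ↔ RelAcyclic A n (univ : Set (OnePoint B)) {OnePoint.infty} := by
  obtain ⟨d₀, hd₀⟩ := hne
  set p : M → OnePoint B := fun x => if h : x ∈ C \ D then ↑(k ⟨x, h⟩) else OnePoint.infty
  set e : OnePoint B → M := fun o => o.elim d₀ fun b => (k.symm b : M)
  have hpk : ∀ x : ↥(C \ D), p x = k x := fun x => dif_pos x.2
  have hpD : ∀ x, x ∉ C \ D → p x = OnePoint.infty := fun x hx => dif_neg hx
  have hek : ∀ b : B, e b = k.symm b := fun b => rfl
  have heC : ∀ o, e o ∈ C := fun o => by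
    induction o using OnePoint.rec with
    | infty => exact hDC hd₀
    | coe b => exact (k.symm b).2.1
  have hp : RelCont p C D univ {OnePoint.infty} := by
    refine ⟨mapsTo_univ _ _, fun x hx => ?_, fun V hV => ?_⟩
    · have h1 : ContinuousOn p (C \ D) := continuousOn_iff_continuous_domRestrict.2 <|
        (OnePoint.continuous_coe.comp k.continuous).congr fun x => (hpk x).symm
      refine (h1 x hx).mono_of_mem_nhdsWithin ?_
      exact inter_mem self_mem_nhdsWithin
        (mem_nhdsWithin_of_mem_nhds (hD.isOpen_compl.mem_nhds hx.2))
    · rw [nhdsSet_singleton] at hV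
      obtain ⟨s, ⟨-, hs⟩, hsV⟩ := OnePoint.hasBasis_nhds_infty.mem_iff.1 hV
      refine ⟨((fun b => (k.symm b : M)) '' s)ᶜ, ?_, ?_⟩
      · have hcl : IsClosed ((fun b => (k.symm b : M)) '' s) :=
          (hs.image (by fun_prop)).isClosed
        refine hcl.isOpen_compl.mem_nhdsSet.2 ?_
        rintro x hx ⟨b, -, rfl⟩
        exact (k.symm b).2.2 hx
      · rintro x ⟨hxs, -⟩
        apply hsV
        by_cases hx : x ∈ C \ D
        · lift x to ↥(C \ D) using hx
          rw [hpk]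
          exact .inl ⟨k x, fun h => hxs ⟨k x, h, by simp⟩, rfl⟩
        · exact .inr (hpD x hx)
  have he : RelCont e univ {OnePoint.infty} C D := by
    refine ⟨fun o _ => heC o, fun o ho => ?_, fun V hV => ?_⟩
    · induction o using OnePoint.rec with
      | infty => exact absurd rfl ho.2
      | coe b =>
        refine ContinuousAt.continuousWithinAt (OnePoint.continuousAt_coe.2 ?_)
        exact Continuous.continuousAt (by change Continuous fun b => (k.symm b : M); fun_prop)
    · obtain ⟨W, hW, hDW, hWV⟩ := mem_nhdsSet_iff_exists.1 hV
      have hK : IsCompact (C \ W) := hC.diff hW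
      have hs : IsCompact (k '' (Subtype.val ⁻¹' (C \ W))) := by
        refine IsCompact.image ?_ k.continuous
        refine IsInducing.subtypeVal.isCompact_preimage_iff ?_ |>.2 hK
        rw [Subtype.range_coe]
        exact sdiff_subset_sdiff_right hDW
      have hcl : IsClosed (k '' (Subtype.val ⁻¹' (C \ W))) :=
        k.isClosedMap _ (hK.isClosed.preimage continuous_subtype_val)
      have hmem := OnePoint.hasBasis_nhds_infty.mem_of_mem ⟨hcl, hs⟩
      refine ⟨_, by rwa [nhdsSet_singleton], ?_⟩
      rintro o ⟨⟨b, hb, rfl⟩ | rfl, -⟩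
      · by_contra h
        exact hb ⟨k.symm b, ⟨(k.symm b).2.1, fun h' => h (hWV h')⟩, by simp⟩
      · exact hWV (hDW hd₀)
  refine ⟨fun h => h.of_relCont he hp OnePoint.isClosed_infty fun o ho => ?_,
    fun h => h.of_relCont hp he hD fun x hx => ?_⟩
  · induction o using OnePoint.rec with
    | infty => exact absurd rfl ho.2
    | coe b => rw [hek, hpk, k.apply_symm_apply]
  · lift x to ↥(C \ D) using hx
    rw [hpk, hek, k.symm_apply_apply]

lemma relAcyclic_of_subsingleton_Hc (hC : IsCompact C) (hD : IsClosed D) (hDC : D ⊆ C)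
    (k : ↥(C \ D) ≃ₜ B) (h : Subsingleton (Hc A (n + 1) B)) : RelAcyclic A n C D := by
  by_cases hB : CompactSpace B
  · rw [Hc, if_pos hB, subsingleton_ASH_iff, ← relAcyclic_iff_of_homeomorph k] at h
    have hCD : IsCompact (C \ D) := isCompact_iff_compactSpace.2 k.symm.compactSpace
    have := h.union_of_disjoint hCD.isClosed hD disjoint_sdiff_left
    rwa [sdiff_union_of_subset hDC] at this
  · rw [Hc, if_neg hB, subsingleton_ASH_iff, ← relAcyclic_singleton_iff OnePoint.infty] at h
    refine (relAcyclic_iff_onePoint hC hD hDC ?_ k).2 h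
    by_contra hne
    rw [not_nonempty_iff_eq_empty.1 hne, sdiff_empty] at k
    have := isCompact_iff_compactSpace.1 hC
    exact hB k.compactSpace

/-- A locally compact subset of a Hausdorff space is open in its closure. -/
lemma isClosed_closure_diff {T : Type*} [TopologicalSpace T] [T2Space T] (S : Set T)
    [LocallyCompactSpace S] : IsClosed (closure S \ S) := by
  rw [← isOpen_compl_iff, isOpen_iff_mem_nhds]
  intro x hx
  by_cases hxS : x ∈ S
  · obtain ⟨K, hK, hxK⟩ := exists_compact_mem_nhds (⟨x, hxS⟩ : S)
    rw [nhds_subtype_eq_comap, mem_comap] at hxK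
    obtain ⟨U, hU, hUK⟩ := hxK
    filter_upwards [interior_mem_nhds.2 hU] with y hy hyS
    have h1 : y ∈ closure (interior U ∩ S) := isOpen_interior.inter_closure ⟨hy, hyS.1⟩
    have h2 : interior U ∩ S ⊆ Subtype.val '' K := fun z hz =>
      ⟨⟨z, hz.2⟩, hUK (interior_subset (s := U) hz.1), rfl⟩
    obtain ⟨z, -, rfl⟩ := closure_minimal h2 (hK.image continuous_subtype_val).isClosed h1
    exact hyS.2 z.2
  · have : x ∉ closure S := fun h => hx ⟨h, hxS⟩
    filter_upwards [isClosed_closure.isOpen_compl.mem_nhds this] with y hy hyS using hy hyS.1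

lemma subsingleton_Hc_of_relAcyclic [CompactSpace M] (S : Set M) [LocallyCompactSpace S]
    (h : ∀ C D : Set M, IsCompact C → IsCompact D → D ⊆ C → RelAcyclic A n C D) :
    Subsingleton (Hc A (n + 1) S) := by
  have hD := isClosed_closure_diff S
  have hdiff : closure S \ (closure S \ S) = S := by
    rw [sdiff_sdiff_cancel_left subset_closure]
  have h := h _ _ isClosed_closure.isCompact hD.isCompact sdiff_subset
  have k : ↥(closure S \ (closure S \ S)) ≃ₜ S := Homeomorph.setCongr hdiff
  by_cases hS : CompactSpace S
  · have hS' : closure S = S := (isCompact_iff_compactSpace.2 hS).isClosed.closure_eq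
    rw [hS', sdiff_self] at h
    rw [Hc, if_pos hS, subsingleton_ASH_iff]
    exact (relAcyclic_iff_of_homeomorph (Homeomorph.refl S)).1 h
  · rw [Hc, if_neg hS, subsingleton_ASH_iff, ← relAcyclic_singleton_iff OnePoint.infty]
    refine (relAcyclic_iff_onePoint isClosed_closure.isCompact hD sdiff_subset ?_ k).1 h
    by_contra hne
    refine hS (isCompact_iff_compactSpace.1 ?_)
    have : closure S = S :=
      (sdiff_eq_empty.1 (not_nonempty_iff_eq_empty.1 hne)).antisymm subset_closure
    exact this ▸ isClosed_closure.isCompact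

/-- A compact pair whose difference embeds in a space without compactly supported cohomology
in degree `n + 1` is acyclic in that degree. -/
lemma relAcyclic_of_isEmbedding {Y : Type*} [TopologicalSpace Y] [LocallyCompactSpace M]
    (hY : ∀ S : Set Y, LocallyCompactSpace S → Subsingleton (Hc A (n + 1) S))
    (hC : IsCompact C) (hD : IsClosed D) (hDC : D ⊆ C) {h : ↥(C \ D) → Y}
    (hh : IsEmbedding h) : RelAcyclic A n C D := by
  have : LocallyCompactSpace ↥(C \ D) :=
    (hC.isClosed.isLocallyClosed.inter hD.isOpen_compl.isLocallyClosed).locallyCompactSpace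
  have := hh.toHomeomorph.symm.isClosedEmbedding.locallyCompactSpace
  exact relAcyclic_of_subsingleton_Hc hC hD hDC hh.toHomeomorph (hY _ this)

end CompactSupports

end AS

/-! ### Light maps -/

section Light

open Filter Topology

lemma covDimLE_zero_of_covDim_eq_zero {T : Type*} [TopologicalSpace T] (h : covDim T = 0) :
    CovDimLE T 0 := by
  have hne : {e : ℕ∞ | ∃ n : ℕ, e = (n : ℕ∞) ∧ CovDimLE T n}.Nonempty := by
    by_contra hne
    rw [covDim, not_nonempty_iff_eq_empty.1 hne, sInf_empty] at h
    exact ENat.top_ne_zero h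
  obtain ⟨n, hn, hT⟩ := csInf_mem hne
  rw [← covDim, h] at hn
  rwa [← Nat.cast_eq_zero.1 hn.symm]

lemma CovDimLE.exists_isClopen {T : Type*} [TopologicalSpace T] [T1Space T]
    (h : CovDimLE T 0) {U : Set T} (hU : IsOpen U) {x : T} (hx : x ∈ U) :
    ∃ v : Set T, IsClopen v ∧ x ∈ v ∧ v ⊆ U := by
  classical
  obtain ⟨V, hVo, hV, hVU, hcard⟩ := h {U, {x}ᶜ} (by simp [hU]) <| by
    refine eq_univ_of_forall fun y => ?_
    by_cases hy : y = x
    · exact ⟨U, by simp, hy ▸ hx⟩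
    · exact ⟨{x}ᶜ, by simp, hy⟩
  obtain ⟨v, hv, hxv⟩ := mem_sUnion.1 (hV ▸ mem_univ x)
  refine ⟨v, ⟨?_, hVo v hv⟩, hxv, ?_⟩
  · rw [← isOpen_compl_iff, isOpen_iff_mem_nhds]
    intro y hy
    obtain ⟨w, hw, hyw⟩ := mem_sUnion.1 (hV ▸ mem_univ y)
    filter_upwards [(hVo w hw).mem_nhds hyw] with z hzw hzv
    have hne : v ≠ w := fun e => hy (e ▸ hyw)
    have := hcard {v, w} (by simp [insert_subset_iff, hv, hw]) ⟨z, by simp [hzv, hzw]⟩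
    rw [Finset.card_pair hne] at this
    omega
  · obtain ⟨u, hu, hvu⟩ := hVU v hv
    rcases hu with rfl | rfl
    · exact hvu
    · exact absurd rfl (hvu hxv)

open scoped Classical in
/-- A map with zero-dimensional fibres admits functions with small support which take at most
two values, prescribed by a function on the base, on each fibre. -/
lemma exists_bump_of_light {X Y : Type*} [MetricSpace X] [CompactSpace X] [MetricSpace Y]
    {f : X → Y} (hf : Continuous f) (x : X) (h : CovDimLE (f ⁻¹' {f x} : Set X) 0)
    {ε : ℝ} (hε : 0 < ε) :
    ∃ (ρ : Y → ℝ) (u : X → ℝ), Continuous ρ ∧ Continuous u ∧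
      (∀ z, u z = 0 ∨ u z = ρ (f z)) ∧ u x ≠ 0 ∧ ∀ z, u z ≠ 0 → dist z x < ε := by
  have hF : IsClosed (f ⁻¹' {f x}) := isClosed_singleton.preimage hf
  obtain ⟨v, hv, hxv, hvε⟩ := h.exists_isClopen (U := Subtype.val ⁻¹' Metric.ball x ε)
    (Metric.isOpen_ball.preimage continuous_subtype_val) (x := ⟨x, rfl⟩)
    (Metric.mem_ball_self hε)
  have hK : IsCompact (Subtype.val '' v) :=
    (hF.isClosedEmbedding_subtypeVal.isClosedMap v hv.isClosed).isCompact
  have hK' : IsCompact (Subtype.val '' vᶜ) :=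
    (hF.isClosedEmbedding_subtypeVal.isClosedMap _ hv.compl.isClosed).isCompact
  obtain ⟨G₀, G', hG₀, hG', hKG, hKG', hdisj⟩ := SeparatedNhds.of_isCompact_isCompact hK hK'
    (disjoint_image_of_injective Subtype.val_injective disjoint_compl_right)
  set G := G₀ ∩ Metric.ball x ε with hG
  have hGo : IsOpen G := hG₀.inter Metric.isOpen_ball
  have hcl : IsClosed (f '' (G ∪ G')ᶜ) := hf.isClosedMap _ (hGo.union hG').isClosed_compl
  have hfx : f x ∉ f '' (G ∪ G')ᶜ := by
    rintro ⟨z, hz, hzx⟩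
    by_cases hzv : (⟨z, hzx⟩ : f ⁻¹' {f x}) ∈ v
    · exact hz (.inl ⟨hKG ⟨_, hzv, rfl⟩, hvε hzv⟩)
    · exact hz (.inr (hKG' ⟨_, hzv, rfl⟩))
  obtain ⟨δ, hδ, hball⟩ := Metric.mem_nhds_iff.1 (hcl.isOpen_compl.mem_nhds hfx)
  have hρ : Continuous fun y => max 0 (δ - dist y (f x)) := by fun_prop
  refine ⟨_, fun z => if z ∈ G then max 0 (δ - dist (f z) (f x)) else 0, hρ, ?_, fun z => ?_,
    ?_, fun z hz => ?_⟩
  · refine continuous_if ?_ (hρ.comp hf).continuousOn continuousOn_const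
    intro a ha
    rw [ofPred_mem_eq, hGo.frontier_eq] at ha
    have haG' : a ∉ G' := fun h => by
      obtain ⟨b, hb, hb'⟩ := mem_closure_iff.1 ha.1 G' hG' h
      exact disjoint_left.1 hdisj hb'.1 hb
    refine max_eq_left (sub_nonpos.2 (not_lt.1 fun h => hball h ⟨a, ?_, rfl⟩))
    exact fun h => h.elim ha.2 haG'
  · dsimp only
    split_ifs
    exacts [.inr rfl, .inl rfl]
  · have hxG : x ∈ G := ⟨hKG ⟨_, hxv, rfl⟩, Metric.mem_ball_self hε⟩
    simp [hxG, hδ]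
  · by_contra h
    exact hz (if_neg fun hzG => h hzG.2)

end Light

namespace AS

open Filter Topology

variable {A : Type*} [AddCommGroup A] {n : ℕ}

/-- A compact pair in `Y × ℝ^ι` lying over finitely many graphs, described coordinatewise by two
values, has no more cohomology than `Y`. -/
lemma relAcyclic_of_two_valued {Y : Type*} [MetricSpace Y] [LocallyCompactSpace Y]
    {ι : Type*} [Fintype ι]
    (hY : ∀ S : Set Y, LocallyCompactSpace S → Subsingleton (Hc A (n + 1) S))
    {ρ : ι → Y → ℝ} (hρ : ∀ c, Continuous (ρ c)) (S : Finset ι) :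
    ∀ C D : Set (Y × (ι → ℝ)), IsCompact C → IsClosed D → D ⊆ C →
      (∀ m ∈ C, ∀ c, m.2 c = 0 ∨ m.2 c = ρ c m.1) →
      (∀ c ∉ S, (∀ m ∈ C \ D, m.2 c = 0) ∨ ∀ m ∈ C \ D, m.2 c ≠ 0) →
      RelAcyclic A n C D := by
  classical
  induction S using Finset.induction_on with
  | empty =>
    intro C D hC hD hDC hval hdec
    have H : ∀ c, ∃ g : Y → ℝ, Continuous g ∧ ∀ m ∈ C \ D, m.2 c = g m.1 := fun c => by
      rcases hdec c (Finset.notMem_empty c) with h | h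
      · exact ⟨fun _ => 0, continuous_const, h⟩
      · exact ⟨ρ c, hρ c, fun m hm => (hval m hm.1 c).resolve_left (h m hm)⟩
    choose g hg hgm using H
    have hval : (fun y => (y, fun c => g c y)) ∘ (fun m : ↥(C \ D) => m.1.1) = Subtype.val :=
      funext fun m => Prod.ext rfl (funext fun c => (hgm c m.1 m.2).symm)
    exact relAcyclic_of_isEmbedding hY hC hD hDC
      (IsEmbedding.of_comp (by fun_prop) (by fun_prop) (hval ▸ IsEmbedding.subtypeVal))
  | insert c S hc ih =>
    intro C D hC hD hDC hval hdec
    set D₁ := D ∪ C ∩ {m | m.2 c = 0} with hD₁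
    have hD₁C : D₁ ⊆ C := union_subset hDC inter_subset_left
    have hD₁c : IsClosed D₁ :=
      hD.union (hC.isClosed.inter (isClosed_eq (by fun_prop) continuous_const))
    refine RelAcyclic.trans hD₁c hD₁C subset_union_left
      (ih C D₁ hC hD₁c hD₁C hval fun b hb => ?_)
      (ih D₁ D (hC.of_isClosed_subset hD₁c hD₁C) hD subset_union_left
        (fun m hm => hval m (hD₁C hm)) fun b hb => ?_)
    · by_cases hbc : b = c
      · exact .inr fun m hm h => hm.2 (.inr ⟨hm.1, hbc ▸ h⟩)
      · have hsub : C \ D₁ ⊆ C \ D := sdiff_subset_sdiff_right subset_union_left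
        exact (hdec b (by simp [hbc, hb])).imp (fun h m hm => h m (hsub hm))
          fun h m hm => h m (hsub hm)
    · by_cases hbc : b = c
      · exact .inl fun m hm => hbc ▸ (hm.1.resolve_left hm.2).2
      · have hsub : D₁ \ D ⊆ C \ D := sdiff_subset_sdiff_left hD₁C
        exact (hdec b (by simp [hbc, hb])).imp (fun h m hm => h m (hsub hm))
          fun h m hm => h m (hsub hm)

/-- A Lebesgue number for a relative cocycle of a compact pair. -/
lemma exists_lebesgue_number {X : Type*} [MetricSpace X] {C D : Set X} (hC : IsCompact C)
    (hD : IsCompact D) {k l : ℕ} {φ : Cochain A X k} {θ : Cochain A X l} (hθ : LocVan C θ)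
    (hφ : NearVan C D φ) :
    ∃ δ > 0, (∀ s, (∀ i, s i ∈ C) → (∀ i j, dist (s i) (s j) < δ) → θ s = 0) ∧
      ∀ s, (∀ i, s i ∈ C ∧ ∃ y ∈ D, dist (s i) y < δ) → φ s = 0 := by
  obtain ⟨δ₁, hδ₁, h₁⟩ := lebesgue_number_lemma_of_metric
    (c := fun U : {U : Set X // IsOpen U ∧ ∀ s, (∀ i, s i ∈ U ∩ C) → θ s = 0} => U.1) hC
    (fun U => U.2.1) fun x hx => by
      obtain ⟨V, hV, h⟩ := hθ x hx
      obtain ⟨U, hU, hxU, hUV⟩ := mem_nhdsWithin.1 hV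
      exact mem_iUnion.2 ⟨⟨U, hU, fun s hs => h s fun i => hUV (hs i)⟩, hxU⟩
  obtain ⟨V, hV, h⟩ := hφ
  obtain ⟨V', hV', hDV', hVV'⟩ := mem_nhdsSet_iff_exists.1 hV
  obtain ⟨δ₂, hδ₂, h₂⟩ := hD.exists_thickening_subset_open hV' hDV'
  refine ⟨min δ₁ δ₂, lt_min hδ₁ hδ₂, fun s hsC hs => ?_, fun s hs => h s fun i => ?_⟩
  · obtain ⟨U, hU⟩ := h₁ (s 0) (hsC 0)
    exact U.2.2 s fun i => ⟨hU ((hs i 0).trans_le (min_le_left _ _)), hsC i⟩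
  · obtain ⟨hC, y, hy, hd⟩ := hs i
    exact ⟨hVV' (h₂ (Metric.mem_thickening_iff.2 ⟨y, hy, hd.trans_le (min_le_right _ _)⟩)), hC⟩

/-- A relative cocycle is a relative coboundary if its pair maps onto an acyclic pair with fibres
small enough for the cocycle. -/
lemma exists_cobounding_of_small_fibres {X M : Type*} [MetricSpace X] [TopologicalSpace M]
    {C D : Set X} {q : X → M} (hq : Continuous q) {φ : Cochain A X (n + 1)} {δ : ℝ}
    (hdφ : ∀ s, (∀ i, s i ∈ C) → (∀ i j, dist (s i) (s j) < δ) → d A X (n + 1) φ s = 0)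
    (hφ : ∀ s, (∀ i, s i ∈ C ∧ ∃ y ∈ D, dist (s i) y < δ) → φ s = 0)
    (hsmall : ∀ x, ∃ W ∈ 𝓝 (q x), ∀ y z, q y ∈ W → q z ∈ W → dist y z < δ)
    (h : RelAcyclic A n (q '' C) (q '' D)) :
    ∃ ψ : Cochain A X n, LocVan C (φ - d A X n ψ) ∧ NearVan C D ψ := by
  classical
  rcases isEmpty_or_nonempty X with hX | ⟨⟨x₀⟩⟩
  · exact ⟨0, fun x => hX.elim x, ∅, by simp [eq_empty_of_isEmpty D], fun s => hX.elim (s 0)⟩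
  choose W hW hWs using hsmall
  have hσ : ∀ m, ∃ x, m ∈ q '' C → x ∈ C ∧ q x = m := fun m => by
    by_cases hm : m ∈ q '' C
    · obtain ⟨x, hx⟩ := hm
      exact ⟨x, fun _ => hx⟩
    · exact ⟨x₀, fun h => absurd h hm⟩
  choose σ hσ using hσ
  set V : Set M := {m | ∃ x ∈ D, m ∈ W x}
  have hV : V ∈ 𝓝ˢ (q '' D) := mem_nhdsSet_iff_forall.2 <| by
    rintro _ ⟨x, hx, rfl⟩
    exact mem_of_superset (hW x) fun m hm => ⟨x, hx, hm⟩
  have hVφ : ∀ s, (∀ i, s i ∈ q ⁻¹' V ∩ C) → φ s = 0 := fun s hs => hφ s fun i => by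
    obtain ⟨⟨x, hx, hm⟩, hC⟩ := hs i
    exact ⟨hC, x, hx, hWs x _ _ hm (mem_of_mem_nhds (hW x))⟩
  have hWφ : ∀ x s, (∀ i, s i ∈ q ⁻¹' W x ∩ C) → d A X (n + 1) φ s = 0 := fun x s hs =>
    hdφ s (fun i => (hs i).2) fun i j => hWs x _ _ (hs i).1 (hs j).1
  have hσmem : ∀ S : Set M, ∀ m ∈ S ∩ q '' C, σ m ∈ q ⁻¹' S ∩ C := fun S m hm =>
    ⟨by rw [mem_preimage, (hσ m hm.2).2]; exact hm.1, (hσ m hm.2).1⟩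
  have hrmem : ∀ S : Set M, ∀ x ∈ q ⁻¹' S ∩ C, σ (q x) ∈ q ⁻¹' S ∩ C := fun S x hx =>
    hσmem S _ ⟨hx.1, mem_image_of_mem q hx.2⟩
  obtain ⟨ψ, hψ, hψD⟩ := h (pull A σ (n + 1) φ)
    (by
      rintro _ ⟨x, hx, rfl⟩
      exact ⟨W x ∩ q '' C, inter_mem (mem_nhdsWithin_of_mem_nhds (hW x)) self_mem_nhdsWithin,
        fun s hs => hWφ x (σ ∘ s) fun i => hσmem _ _ (hs i)⟩)
    ⟨V, hV, fun s hs => hVφ (σ ∘ s) fun i => hσmem _ _ (hs i)⟩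
  have hqC : RelCont q C D (q '' C) (q '' D) :=
    ⟨mapsTo_image q C, fun x _ => hq.continuousWithinAt, fun S hS =>
      ⟨q ⁻¹' S, hq.tendsto_nhdsSet (mapsTo_image q D) hS, fun x hx => hx.1⟩⟩
  refine ⟨pull A q n ψ - prism (σ ∘ q) n φ, ?_, ?_⟩
  · have e : φ - d A X n (pull A q n ψ - prism (σ ∘ q) n φ) =
        pull A q (n + 1) (pull A σ (n + 1) φ - d A M n ψ) -
          prism (σ ∘ q) (n + 1) (d A X (n + 1) φ) := by
      have h1 := prism_d (σ ∘ q) n φ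
      have h2 : pull A q (n + 1) (pull A σ (n + 1) φ) = pull A (σ ∘ q) (n + 1) φ := rfl
      rw [map_sub, map_sub, ← pull_d, eq_sub_of_add_eq h1, h2]
      abel
    rw [e]
    intro x hx
    refine (vanAt_pull (mapsTo_image q C) hq.continuousWithinAt
      (hψ _ (mem_image_of_mem q hx))).sub ⟨q ⁻¹' W x ∩ C, inter_mem (mem_nhdsWithin_of_mem_nhds
        (hq.continuousAt.preimage_mem_nhds (hW x))) self_mem_nhdsWithin, fun s hs => ?_⟩
    exact prism_eq_zero _ _ _ _ (hWφ x) s hs fun i => hrmem _ _ (hs i)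
  · refine (hqC.nearVan hψD).sub ⟨q ⁻¹' V, hq.tendsto_nhdsSet (mapsTo_image q D) hV,
      fun s hs => ?_⟩
    exact prism_eq_zero _ _ _ _ hVφ s hs fun i => hrmem _ _ (hs i)

lemma relAcyclic_of_light {X Y : Type*} [MetricSpace X] [CompactSpace X] [MetricSpace Y]
    [LocallyCompactSpace Y] {f : X → Y} (hf : Continuous f)
    (hlight : ∀ y, CovDimLE (f ⁻¹' {y} : Set X) 0)
    (hY : ∀ S : Set Y, LocallyCompactSpace S → Subsingleton (Hc A (n + 1) S))
    {C D : Set X} (hC : IsCompact C) (hD : IsCompact D) (hDC : D ⊆ C) : RelAcyclic A n C D := by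
  intro φ hdφ hφ
  obtain ⟨δ, hδ, hdφ, hφ⟩ := exists_lebesgue_number hC hD hdφ hφ
  choose ρ u hρ hu huρ hux huδ using fun x =>
    exists_bump_of_light hf x (hlight (f x)) (half_pos hδ)
  obtain ⟨J, hJ⟩ := isCompact_univ.elim_finite_subcover (fun x => {z | u x z ≠ 0})
    (fun x => isOpen_ne_fun (hu x) continuous_const) fun x _ => mem_iUnion.2 ⟨x, hux x⟩
  have hq : Continuous fun x => (f x, fun c : J => u c x) := by fun_prop
  refine exists_cobounding_of_small_fibres hq hdφ hφ (fun x => ?_) ?_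
  · obtain ⟨c, hc, hcx⟩ := mem_iUnion₂.1 (hJ (mem_univ x))
    refine ⟨{m | m.2 ⟨c, hc⟩ ≠ 0}, IsOpen.mem_nhds (isOpen_ne_fun (by fun_prop) continuous_const)
      hcx, fun y z hy hz => ?_⟩
    have := dist_triangle_right y z c
    linarith [huδ c y hy, huδ c z hz]
  · refine relAcyclic_of_two_valued hY (ρ := fun c : J => ρ c) (fun c => hρ c) Finset.univ _ _
      (hC.image hq) (hD.image hq).isClosed (image_mono hDC) ?_ fun c hc => ?_
    · rintro _ ⟨x, -, rfl⟩ c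
      exact huρ c x
    · exact absurd (Finset.mem_univ c) hc

end AS

/-- **Lemma 12** (Dranishnikov–West).  If `f : X → Y` is a light (all point inverses
zero-dimensional) continuous map of a compact metric space `X` onto a compact metric space
`Y` of finite covering dimension, then `dim_A X ≤ dim_A Y` for every abelian group `A`. -/
theorem cohDim_le_of_light_map (X : Type) [MetricSpace X] [CompactSpace X]
    (Y : Type) [MetricSpace Y] [CompactSpace Y]
    (f : X → Y) (hf : Continuous f) (hsurj : Function.Surjective f)
    (hlight : ∀ y : Y, covDim (f ⁻¹' {y} : Set X) = 0)
    (hfin : covDim Y < ⊤)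
    (A : Type*) [AddCommGroup A] :
    cohDim A X ≤ cohDim A Y := by
  refine sSup_le ?_
  rintro _ ⟨n, rfl, B, hB, hBn⟩
  cases n with
  | zero => exact zero_le
  | succ n =>
    by_contra hlt
    have hY : ∀ S : Set Y, LocallyCompactSpace S → Subsingleton (AS.Hc A (n + 1) S) :=
      fun S hS => not_nontrivial_iff_subsingleton.1 fun hSn =>
        hlt (le_sSup ⟨n + 1, rfl, S, hS, hSn⟩)
    refine not_nontrivial_iff_subsingleton.2 ?_ hBn
    exact AS.subsingleton_Hc_of_relAcyclic B fun C D hC hD hDC =>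
      AS.relAcyclic_of_light hf (fun y => covDimLE_zero_of_covDim_eq_zero (hlight y)) hY hC hD hDC
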